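/- arXiv:2506.03650 — 2 statements merged into one kernel-verified Lean document; each statement's English description precedes it below -/
import Mathlib

section
/- Let n_θ be a positive integer and T_f > 0. For each h > 0 such that T_f/h is a positive integer, set N_h = T_f/h + 1, and suppose we are given a matrix Φ_h ∈ ℝ^{N_h × n_θ} with Φ_h⊤Φ_h invertible and a positive semidefinite matrix Σ_h ∈ ℝ^{N_h × N_h}. Assume: (A1) there exists a positive definite matrix R ∈ ℝ^{n_θ × n_θ} such that (h/T_f)·Φ_h⊤Φ_h → R as h → 0 (along the admissible values of h); and (A2) there exists M > 0 such that Tr(Σ_h) ≤ M for all admissible h. Then Tr((Φ_h⊤Φ_h)^{-1} Φ_h⊤ Σ_h Φ_h (Φ_h⊤Φ_h)^{-1}) = O(h) as h → 0, i.e., there exist constants C > 0 and h₀ > 0 such that Tr((Φ_h⊤Φ_h)^{-1} Φ_h⊤ Σ_h Φ_h (Φ_h⊤Φ_h)^{-1}) ≤ C·h for all admissible h ≤ h₀. -/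
open Matrix Filter Topology

section
open scoped MatrixOrder

theorem exists_factor {ι : Type*} [Fintype ι] {S : Matrix ι ι ℝ} (hS : S.PosSemidef) :
    ∃ B : Matrix ι ι ℝ, S = Bᴴ * B := by
  classical
  obtain ⟨B, hB⟩ := CStarAlgebra.nonneg_iff_eq_star_mul_self.mp hS.nonneg
  exact ⟨B, hB⟩

end

theorem trace_conj_le {ι κ : Type*} [Fintype ι] [Fintype κ]
    (P : Matrix ι κ ℝ) (S : Matrix ι ι ℝ) (hS : S.PosSemidef) :
    (Pᵀ * S * P).trace ≤ S.trace * (Pᵀ * P).trace := by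
  classical
  obtain ⟨B, rfl⟩ := exists_factor hS
  have keyB : (Bᵀ * B).trace = ∑ j, ∑ i, B i j ^ 2 := by
    simp [Matrix.trace, Matrix.mul_apply, sq]
  have keyP : (Pᵀ * P).trace = ∑ j, ∑ i, P i j ^ 2 := by
    simp [Matrix.trace, Matrix.mul_apply, sq]
  have keyBP : ((B * P)ᵀ * (B * P)).trace = ∑ j, ∑ i, (B * P) i j ^ 2 := by
    generalize B * P = Q
    simp [Matrix.trace, Matrix.mul_apply, sq]
  have e : Pᵀ * (Bᴴ * B) * P = (B * P)ᵀ * (B * P) := by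
    rw [Matrix.transpose_mul, Matrix.conjTranspose_eq_transpose_of_trivial]
    simp only [Matrix.mul_assoc]
  rw [e, Matrix.conjTranspose_eq_transpose_of_trivial, keyB, keyP, keyBP, Finset.sum_comm,
    Finset.sum_comm (f := fun j i => B i j ^ 2), Finset.sum_mul_sum]
  refine Finset.sum_le_sum fun i _ => Finset.sum_le_sum fun j _ => ?_
  rw [Matrix.mul_apply]
  exact Finset.sum_mul_sq_le_sq_mul_sq _ _ _

/-- **Asymptotic covariance scaling with fast sampling.**
Admissible sampling intervals are `h = T_f / m` for positive integers `m`, so that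
`N_h = T_f / h + 1 = m + 1`.  Under the excitation condition (A1) and the bounded total
noise energy condition (A2), the trace of the least-squares covariance matrix
`(Φ_hᵀΦ_h)⁻¹ Φ_hᵀ Σ_h Φ_h (Φ_hᵀΦ_h)⁻¹` is `O(h)` as `h → 0`. -/
theorem trace_cov_isBigO_of_excitation
    (nθ : ℕ) (hnθ : 0 < nθ) (Tf : ℝ) (hTf : 0 < Tf)
    (Φ : (m : ℕ+) → Matrix (Fin (m + 1)) (Fin nθ) ℝ)
    (S : (m : ℕ+) → Matrix (Fin (m + 1)) (Fin (m + 1)) ℝ)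
    (hinv : ∀ m : ℕ+, IsUnit ((Φ m)ᵀ * Φ m))
    (hpsd : ∀ m : ℕ+, (S m).PosSemidef)
    (R : Matrix (Fin nθ) (Fin nθ) ℝ) (hR : R.PosDef)
    (hA1 : Tendsto (fun m : ℕ+ => ((Tf / (m : ℝ)) / Tf) • ((Φ m)ᵀ * Φ m)) atTop (𝓝 R))
    (M : ℝ) (hM : 0 < M) (hA2 : ∀ m : ℕ+, (S m).trace ≤ M) :
    ∃ C > (0 : ℝ), ∃ h₀ > (0 : ℝ), ∀ m : ℕ+, Tf / (m : ℝ) ≤ h₀ →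
      (((Φ m)ᵀ * Φ m)⁻¹ * (Φ m)ᵀ * S m * Φ m * ((Φ m)ᵀ * Φ m)⁻¹).trace
        ≤ C * (Tf / (m : ℝ)) := by
  have hdet : R.det ≠ 0 := hR.det_pos.ne'
  have hlim : Tendsto (fun m : ℕ+ => (((Tf / (m : ℝ)) / Tf) • ((Φ m)ᵀ * Φ m))⁻¹.trace) atTop
      (𝓝 (R⁻¹.trace)) := by
    have hc : ContinuousAt (fun A : Matrix (Fin nθ) (Fin nθ) ℝ => A⁻¹.trace) R := by
      simp only [Matrix.inv_def, Ring.inverse_eq_inv', Matrix.trace_smul, smul_eq_mul]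
      refine ContinuousAt.mul (ContinuousAt.inv₀ ?_ hdet) ?_
      · exact (continuous_id.matrix_det).continuousAt
      · exact (continuous_id.matrix_adjugate.matrix_trace).continuousAt
    exact hc.tendsto.comp hA1
  set K : ℝ := |R⁻¹.trace| + 1 with hK
  have hKpos : 0 < K := by positivity
  have hev := hlim.eventually_le_const (u := K) (by
    have := le_abs_self (R⁻¹.trace); linarith)
  obtain ⟨m₀, hm₀⟩ := eventually_atTop.mp hev
  have hm₀pos : (0 : ℝ) < (m₀ : ℝ) := by exact_mod_cast m₀.pos
  refine ⟨M * K / Tf, by positivity, Tf / m₀, by positivity, fun m hm => ?_⟩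
  have hmpos : (0 : ℝ) < (m : ℝ) := by exact_mod_cast m.pos
  have hle : m₀ ≤ m := by
    have h1 : (m₀ : ℝ) ≤ (m : ℝ) := (div_le_div_iff_of_pos_left hTf hmpos hm₀pos).mp hm
    exact_mod_cast h1
  have h2 := hm₀ m hle
  set G := (Φ m)ᵀ * Φ m with hG
  set c : ℝ := Tf / (m : ℝ) / Tf with hc
  have hcpos : 0 < c := by positivity
  have hGdet : IsUnit G.det := (Matrix.isUnit_iff_isUnit_det _).mp (hinv m)
  have hGs : (c • G)⁻¹ = c⁻¹ • G⁻¹ := by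
    apply Matrix.inv_eq_right_inv
    rw [Matrix.smul_mul, Matrix.mul_smul, smul_smul, mul_inv_cancel₀ hcpos.ne', one_smul,
      Matrix.mul_nonsing_inv _ hGdet]
  rw [hGs, Matrix.trace_smul, smul_eq_mul, inv_mul_le_iff₀ hcpos] at h2
  have hGt : Gᵀ = G := by rw [hG, Matrix.transpose_mul, Matrix.transpose_transpose]
  have hPt : (Φ m * G⁻¹)ᵀ = G⁻¹ * (Φ m)ᵀ := by
    rw [Matrix.transpose_mul, Matrix.transpose_nonsing_inv, hGt]
  have hmain := trace_conj_le (Φ m * G⁻¹) (S m) (hpsd m)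
  have hPP : (Φ m * G⁻¹)ᵀ * (Φ m * G⁻¹) = G⁻¹ := by
    rw [hPt, Matrix.mul_assoc, ← Matrix.mul_assoc (Φ m)ᵀ, ← hG, Matrix.mul_nonsing_inv _ hGdet,
      Matrix.mul_one]
  have htr : 0 ≤ (G⁻¹).trace := by
    rw [← hPP, ← Matrix.conjTranspose_eq_transpose_of_trivial]
    exact (Matrix.posSemidef_conjTranspose_mul_self _).trace_nonneg
  rw [hPP, hPt] at hmain
  calc (G⁻¹ * (Φ m)ᵀ * S m * Φ m * G⁻¹).trace
      = (G⁻¹ * (Φ m)ᵀ * S m * (Φ m * G⁻¹)).trace := by simp only [Matrix.mul_assoc]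
    _ ≤ (S m).trace * (G⁻¹).trace := hmain
    _ ≤ M * (c * K) := mul_le_mul (hA2 m) h2 htr hM.le
    _ = M * K / Tf * (Tf / (m : ℝ)) := by rw [hc]; ring
end

section
/- Let T > 0 and let u : ℝ → ℝ be continuous with ∫₀^{T} u(t)² dt > 0. For h > 0 with T/h a positive integer, define the 2×2 Gram matrix G(h) with entries G(h)_{11} = h·Σ_{k=0}^{T/h} u(kh)², G(h)_{12} = G(h)_{21} = h·Σ_{k=0}^{T/h} u(kh)·u(kh − h), and G(h)_{22} = h·Σ_{k=0}^{T/h} u(kh − h)². Then as h → 0 (along admissible values), every entry of G(h) converges to ∫₀^{T} u(t)² dt, so G(h) converges to the singular matrix with all four entries equal to ∫₀^{T} u(t)² dt; in particular det G(h) → 0. Hence the scaled Gram matrix of a discrete-time regressor built from a signal and its one-sample-delayed copy does not converge to a positive definite matrix as the sampling interval tends to 0. -/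
open Matrix Filter Topology MeasureTheory

/-- Riemann sums of a continuous two-variable function along delayed samples. -/
lemma delayed_riemann_sum (T : ℝ) (hT : 0 < T) (F : ℝ × ℝ → ℝ) (hF : Continuous F) :
    Tendsto (fun m : ℕ+ => (T / (m : ℝ)) * ∑ k ∈ Finset.range ((m : ℕ) + 1),
      F ((k : ℝ) * (T / (m : ℝ)), (k : ℝ) * (T / (m : ℝ)) - T / (m : ℝ))) atTop
      (𝓝 (∫ t in (0 : ℝ)..T, F (t, t))) := by
  have hcast : Tendsto (fun m : ℕ+ => ((m : ℕ) : ℝ)) atTop atTop :=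
    tendsto_natCast_atTop_atTop.comp tendsto_PNat_val_atTop_atTop
  have hh : Tendsto (fun m : ℕ+ => T / (m : ℝ)) atTop (𝓝 0) :=
    hcast.const_div_atTop T
  have hFd : Continuous (fun t : ℝ => F (t, t)) := by fun_prop
  have h0 : Tendsto (fun m : ℕ+ => T / (m : ℝ) * F (0, - (T / (m : ℝ)))) atTop (𝓝 0) := by
    have hc : Continuous (fun h : ℝ => h * F (0, -h)) := by fun_prop
    have := (hc.tendsto 0).comp hh
    simpa [Function.comp_def] using this
  have h1 : Tendsto (fun m : ℕ+ => ∑ k ∈ Finset.range (m : ℕ), (T / (m : ℝ)) *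
      F (((k + 1 : ℕ) : ℝ) * (T / (m : ℝ)), (k : ℝ) * (T / (m : ℝ)))) atTop
      (𝓝 (∫ t in (0 : ℝ)..T, F (t, t))) := by
    have huc := (isCompact_Icc.prod isCompact_Icc :
      IsCompact (Set.Icc (0 : ℝ) T ×ˢ Set.Icc (0 : ℝ) T)).uniformContinuousOn_of_continuous
        hF.continuousOn
    rw [Metric.uniformContinuousOn_iff] at huc
    rw [Metric.tendsto_atTop']
    intro ε hε
    obtain ⟨δ, hδ, hd⟩ := huc (ε / (2 * T)) (by positivity)
    obtain ⟨N, hN⟩ := Filter.eventually_atTop.1 (hh.eventually (gt_mem_nhds hδ))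
    refine ⟨N, fun m hm => ?_⟩
    have hmδ := hN m hm.le
    have hm0 : (0 : ℝ) < ((m : ℕ) : ℝ) := by exact_mod_cast m.pos
    set h : ℝ := T / (m : ℝ) with hh_def
    have hhpos : 0 < h := by positivity
    have hmh : ((m : ℕ) : ℝ) * h = T := by rw [hh_def]; field_simp
    have hsum : ∫ t in (0 : ℝ)..T, F (t, t) = ∑ k ∈ Finset.range (m : ℕ),
        ∫ t in ((k : ℝ) * h)..(((k + 1 : ℕ) : ℝ) * h), F (t, t) := by
      rw [intervalIntegral.sum_integral_adjacent_intervals (a := fun k : ℕ => (k : ℝ) * h)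
        (fun k _ => hFd.intervalIntegrable _ _)]
      simp [hmh]
    rw [hsum, Real.dist_eq, ← Finset.sum_sub_distrib]
    have hterm : ∀ k ∈ Finset.range (m : ℕ),
        |h * F (((k + 1 : ℕ) : ℝ) * h, (k : ℝ) * h) -
          ∫ t in ((k : ℝ) * h)..(((k + 1 : ℕ) : ℝ) * h), F (t, t)| ≤ ε / (2 * T) * h := by
      intro k hk
      have hk1 : ((k + 1 : ℕ) : ℝ) ≤ ((m : ℕ) : ℝ) := by
        exact_mod_cast Finset.mem_range.1 hk
      have hkT : ((k + 1 : ℕ) : ℝ) * h ≤ T := by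
        rw [← hmh]; gcongr
      have hk0 : 0 ≤ (k : ℝ) * h := by positivity
      have hstep : ((k + 1 : ℕ) : ℝ) * h = (k : ℝ) * h + h := by push_cast; ring
      rw [hstep] at hkT ⊢
      have hconst : h * F ((k : ℝ) * h + h, (k : ℝ) * h) =
          ∫ _t in ((k : ℝ) * h)..((k : ℝ) * h + h), F ((k : ℝ) * h + h, (k : ℝ) * h) := by
        simp
      rw [hconst, ← intervalIntegral.integral_sub (by simp) (hFd.intervalIntegrable _ _)]
      have := intervalIntegral.norm_integral_le_of_norm_le_const
        (a := (k : ℝ) * h) (b := (k : ℝ) * h + h) (C := ε / (2 * T))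
        (f := fun t => F ((k : ℝ) * h + h, (k : ℝ) * h) - F (t, t)) (by
          intro t ht
          rw [Set.uIoc_of_le (by linarith)] at ht
          obtain ⟨ht1, ht2⟩ := ht
          rw [← dist_eq_norm]
          refine (hd _ ⟨⟨?_, ?_⟩, ⟨?_, ?_⟩⟩ _ ⟨⟨?_, ?_⟩, ⟨?_, ?_⟩⟩ ?_).le
          all_goals try (simp only []; linarith)
          rw [Prod.dist_eq, max_lt_iff, Real.dist_eq, Real.dist_eq, abs_lt, abs_lt]
          simp only []
          refine ⟨⟨?_, ?_⟩, ⟨?_, ?_⟩⟩ <;> linarith)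
      rw [Real.norm_eq_abs, add_sub_cancel_left, abs_of_pos hhpos] at this
      exact this
    calc _ ≤ ∑ k ∈ Finset.range (m : ℕ), ε / (2 * T) * h :=
          (Finset.abs_sum_le_sum_abs _ _).trans (Finset.sum_le_sum hterm)
      _ = ε / (2 * T) * (((m : ℕ) : ℝ) * h) := by simp; ring
      _ = ε / 2 := by rw [hmh]; field_simp
      _ < ε := by linarith
  have h2 := h1.add h0
  rw [add_zero] at h2
  refine h2.congr fun m => ?_
  rw [Finset.sum_range_succ', mul_add, Finset.mul_sum]
  congr 1
  · refine Finset.sum_congr rfl fun k _ => ?_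
    have : ((k + 1 : ℕ) : ℝ) * (T / (m : ℝ)) - T / (m : ℝ) = (k : ℝ) * (T / (m : ℝ)) := by
      push_cast; ring
    rw [this]
  · simp

/-- **Failure of the excitation condition for discrete-time regressors.**
For a continuous signal `u` with `∫₀ᵀ u² > 0`, the scaled 2×2 Gram matrix `G(h)` built
from the signal and its one-sample-delayed copy (sampled at `h = T/m`) converges entrywise
to the singular matrix all of whose entries equal `∫₀ᵀ u(t)² dt`; in particular
`det G(h) → 0`, so `G(h)` does not converge to a positive definite matrix as `h → 0`. -/
theorem delayed_regressor_gram_tendsto_singular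
    (T : ℝ) (hT : 0 < T) (u : ℝ → ℝ) (hu : Continuous u)
    (hpos : 0 < ∫ t in (0 : ℝ)..T, u t ^ 2)
    (G : ℕ+ → Matrix (Fin 2) (Fin 2) ℝ)
    (hG : ∀ m : ℕ+, G m =
      !![(T / (m : ℝ)) * ∑ k ∈ Finset.range ((m : ℕ) + 1),
            u ((k : ℝ) * (T / (m : ℝ))) ^ 2,
         (T / (m : ℝ)) * ∑ k ∈ Finset.range ((m : ℕ) + 1),
            u ((k : ℝ) * (T / (m : ℝ))) * u ((k : ℝ) * (T / (m : ℝ)) - T / (m : ℝ));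
         (T / (m : ℝ)) * ∑ k ∈ Finset.range ((m : ℕ) + 1),
            u ((k : ℝ) * (T / (m : ℝ))) * u ((k : ℝ) * (T / (m : ℝ)) - T / (m : ℝ)),
         (T / (m : ℝ)) * ∑ k ∈ Finset.range ((m : ℕ) + 1),
            u ((k : ℝ) * (T / (m : ℝ)) - T / (m : ℝ)) ^ 2]) :
    Tendsto G atTop
      (𝓝 (Matrix.of fun _ _ : Fin 2 => ∫ t in (0 : ℝ)..T, u t ^ 2)) ∧
    Tendsto (fun m : ℕ+ => (G m).det) atTop (𝓝 0) := by
  have hlim : Tendsto G atTop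
      (𝓝 (Matrix.of fun _ _ : Fin 2 => ∫ t in (0 : ℝ)..T, u t ^ 2)) := by
    have a := delayed_riemann_sum T hT (fun p => u p.1 ^ 2) (by fun_prop)
    have b := delayed_riemann_sum T hT (fun p => u p.1 * u p.2) (by fun_prop)
    have c := delayed_riemann_sum T hT (fun p => u p.2 ^ 2) (by fun_prop)
    simp only [← pow_two] at b
    rw [funext hG]
    refine tendsto_pi_nhds.2 fun i => tendsto_pi_nhds.2 fun j => ?_
    fin_cases i <;> fin_cases j
    · simpa using a
    · simpa using b
    · simpa using b
    · simpa using c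
  refine ⟨hlim, ?_⟩
  have hdet := ((continuous_id.matrix_det :
    Continuous fun A : Matrix (Fin 2) (Fin 2) ℝ => A.det).tendsto _).comp hlim
  simpa [Function.comp_def, Matrix.det_fin_two] using hdet
end
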